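/- Let C ⊆ (ZMod 2)^n be a linear subspace, let t ∈ ℕ, let S be uniformly distributed on (ZMod 2)^n, and define N := #{c ∈ C : hammingDist(c, S) ≤ t}. Then E[N²] = E[N] + E[N] · Σ_{c ∈ C, c ≠ 0} P(hammingDist(c, S) ≤ t ∣ wt(S) ≤ t), where the conditional probability is well defined since P(wt(S) ≤ t) ≥ 2^{−n} > 0. -/

import Mathlib

/-!
Write `g` for the indicator of the Hamming ball of radius `t` about `0`, so that
`N s = ∑ c ∈ C, g (c - s)`. Expanding the square,
`∑ s, N s ^ 2 = ∑ c ∈ C, ∑ c' ∈ C, ∑ s, g (c - s) * g (c' - s)`, and substituting `s = c + u` turns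
the inner sum into the autocorrelation `A (c' - c)`, where `A d = ∑ u, g u * g (d - u)`
(`ballInd` is even). As `C` is a subgroup, `c' - c` runs over `C` for each fixed `c`, so the total
is `|C| * ∑ d ∈ C, A d` (`sum_count_sq`). The term `d = 0` is the ball volume `B = A 0`;
the other ones satisfy `A d = B * P(dist d S ≤ t ∣ wt S ≤ t)`, and `∑ s, N s = |C| * B`
(`sum_count`).
-/

open Finset
open scoped BigOperators Classical

noncomputable section

/-- `ldgmBeta w δ = (1 - (1-2w)^δ)/2`: the Bernoulli parameter induced by an
input of relative weight `w` in the degree-`δ` LDGM ensemble. -/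
def ldgmBeta (w : ℝ) (δ : ℕ) : ℝ := (1 - (1 - 2 * w) ^ δ) / 2

/-- `ldgmU D δ = (1 - (1-2D)^(1/δ))/2`. -/
def ldgmU (D : ℝ) (δ : ℕ) : ℝ := (1 - (1 - 2 * D) ^ ((1 : ℝ) / δ)) / 2

/-- Binary entropy function (in bits). -/
def binEnt (x : ℝ) : ℝ := -(x * Real.logb 2 x) - (1 - x) * Real.logb 2 (1 - x)

/-- Binary Kullback–Leibler divergence (in bits). -/
def klBin (a p : ℝ) : ℝ := a * Real.logb 2 (a / p) + (1 - a) * Real.logb 2 ((1 - a) / (1 - p))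

/-- Probability of the event `E` under the uniform distribution on the finite type `Ω`. -/
def unifP (Ω : Type*) [Fintype Ω] (E : Ω → Prop) : ℝ :=
  ((Finset.univ.filter E).card : ℝ) / (Fintype.card Ω : ℝ)

/-- Conditional probability of `E` given `F` under the uniform distribution on `Ω`. -/
def unifCondP (Ω : Type*) [Fintype Ω] (E F : Ω → Prop) : ℝ :=
  unifP Ω (fun ω => E ω ∧ F ω) / unifP Ω F

/-- Expectation of `f` under the uniform distribution on the finite type `Ω`. -/
def unifE (Ω : Type*) [Fintype Ω] (f : Ω → ℝ) : ℝ :=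
  (∑ ω : Ω, f ω) / (Fintype.card Ω : ℝ)

/-- The encoding map of the degree-`δ` LDGM ensemble with `m` inputs and blocklength `n`:
given the random index choices `I`, the `j`-th codeword bit of `z` is
`z (I j 1) + ⋯ + z (I j δ)` (mod 2). -/
def ldgmEnc {m n δ : ℕ} (I : Fin n → Fin δ → Fin m) (z : Fin m → ZMod 2) :
    Fin n → ZMod 2 := fun j => ∑ i : Fin δ, z (I j i)

/-- The real-valued indicator function of the Hamming ball of radius `t` about `0`. -/
def ballInd (n t : ℕ) (s : Fin n → ZMod 2) : ℝ := if hammingNorm s ≤ t then 1 else 0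

/-- The autocorrelation of `ballInd`: the volume of the intersection of the Hamming balls of
radius `t` about `0` and `d`. -/
def ballCorr (n t : ℕ) (d : Fin n → ZMod 2) : ℝ := ∑ u, ballInd n t u * ballInd n t (d - u)

lemma ballInd_neg (n t : ℕ) (s : Fin n → ZMod 2) : ballInd n t (-s) = ballInd n t s := by
  have h : hammingNorm (-s) = hammingNorm s := by simp [hammingNorm]
  simp [ballInd, h]

lemma ballInd_sub (n t : ℕ) (c s : Fin n → ZMod 2) :
    ballInd n t (c - s) = if hammingDist c s ≤ t then 1 else 0 := by
  rw [← ballInd_neg, neg_sub, ballInd, hammingDist_eq_hammingNorm, neg_add_eq_sub]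

lemma ballCorr_zero (n t : ℕ) : ballCorr n t 0 = ∑ u, ballInd n t u := by
  refine Finset.sum_congr rfl fun u _ => ?_
  rw [zero_sub, ballInd_neg]
  simp [ballInd]

lemma ballVol_pos (n t : ℕ) : 0 < ∑ u, ballInd n t u := by
  refine Finset.sum_pos' (fun u _ => ?_) ⟨0, Finset.mem_univ _, ?_⟩
  · unfold ballInd; split_ifs <;> norm_num
  · simp [ballInd]

lemma count_eq (n t : ℕ) (C : Submodule (ZMod 2) (Fin n → ZMod 2)) (s : Fin n → ZMod 2) :
    ((Finset.univ.filter
      (fun c : Fin n → ZMod 2 => c ∈ C ∧ hammingDist c s ≤ t)).card : ℝ) =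
      ∑ c with c ∈ C, ballInd n t (c - s) := by
  simp only [ballInd_sub]
  rw [Finset.sum_boole, Finset.filter_filter]

/-- The probability in the denominator is nonzero by `ballVol_pos`, so the quotient is genuine. -/
lemma condP_eq (n t : ℕ) (d : Fin n → ZMod 2) :
    unifCondP (Fin n → ZMod 2) (fun s => hammingDist d s ≤ t) (fun s => hammingNorm s ≤ t) =
      ballCorr n t d / ∑ u, ballInd n t u := by
  have h1 : ballCorr n t d =
      ((Finset.univ.filter fun s : Fin n → ZMod 2 =>
        hammingDist d s ≤ t ∧ hammingNorm s ≤ t).card : ℝ) := by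
    rw [← Finset.sum_boole]
    refine Finset.sum_congr rfl fun u _ => ?_
    rw [ballInd_sub, ballInd]
    split_ifs <;> simp_all
  have h2 : ∑ u, ballInd n t u =
      ((Finset.univ.filter fun s : Fin n → ZMod 2 => hammingNorm s ≤ t).card : ℝ) := by
    rw [← Finset.sum_boole]
    rfl
  rw [h1, h2, unifCondP, unifP, unifP]
  have hV : (Fintype.card (Fin n → ZMod 2) : ℝ) ≠ 0 := Nat.cast_ne_zero.mpr Fintype.card_ne_zero
  -- `convert` because `unifP` carries classical decidability instances
  convert div_div_div_cancel_right₀ hV _ _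

lemma sum_count (n t : ℕ) (C : Submodule (ZMod 2) (Fin n → ZMod 2)) :
    ∑ s, ∑ c with c ∈ C, ballInd n t (c - s) =
      ((Finset.univ.filter (· ∈ C)).card : ℝ) * ∑ u, ballInd n t u := by
  rw [Finset.sum_comm, ← nsmul_eq_mul, ← Finset.sum_const]
  refine Finset.sum_congr rfl fun c _ => ?_
  exact (Equiv.subLeft c).sum_comp (ballInd n t)

/-- The correlation of two balls depends only on the difference of their centres. -/
lemma sum_mul_shift (n t : ℕ) (c c' : Fin n → ZMod 2) :
    ∑ s, ballInd n t (c - s) * ballInd n t (c' - s) = ballCorr n t (c' - c) := by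
  rw [ballCorr, ← Equiv.sum_comp (Equiv.addLeft c)]
  refine Finset.sum_congr rfl fun u _ => ?_
  rw [Equiv.coe_addLeft, sub_add_cancel_left, ballInd_neg, sub_add_eq_sub_sub]

/-- Each fixed `c ∈ C` contributes the same amount, as `c' ↦ c' - c` permutes `C`. -/
lemma sum_count_sq (n t : ℕ) (C : Submodule (ZMod 2) (Fin n → ZMod 2)) :
    ∑ s, (∑ c with c ∈ C, ballInd n t (c - s)) ^ 2 =
      ((Finset.univ.filter (· ∈ C)).card : ℝ) * ∑ d with d ∈ C, ballCorr n t d := by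
  simp only [sq, Finset.sum_mul_sum]
  rw [Finset.sum_comm, ← nsmul_eq_mul, ← Finset.sum_const]
  refine Finset.sum_congr rfl fun c hc => ?_
  have hc : c ∈ C := by simpa using hc
  rw [Finset.sum_comm]
  simp only [sum_mul_shift]
  refine Finset.sum_equiv (Equiv.subRight c) (fun c' => ?_) (fun _ _ => rfl)
  simp [C.sub_mem_iff_left hc]

/-- for a linear code `C ⊆ (ZMod 2)^n`, a uniformly random source `S`, and
`N := #{c ∈ C : hammingDist(c,S) ≤ t}`, one has
`E[N²] = E[N] + E[N] · Σ_{c ∈ C, c ≠ 0} P(hammingDist(c,S) ≤ t ∣ wt(S) ≤ t)`. -/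
theorem second_moment_simplification (n : ℕ)
    (C : Submodule (ZMod 2) (Fin n → ZMod 2)) (t : ℕ) :
    unifE (Fin n → ZMod 2)
        (fun s => ((Finset.univ.filter
          (fun c : Fin n → ZMod 2 => c ∈ C ∧ hammingDist c s ≤ t)).card : ℝ) ^ 2) =
      unifE (Fin n → ZMod 2)
          (fun s => ((Finset.univ.filter
            (fun c : Fin n → ZMod 2 => c ∈ C ∧ hammingDist c s ≤ t)).card : ℝ)) +
        unifE (Fin n → ZMod 2)
            (fun s => ((Finset.univ.filter
              (fun c : Fin n → ZMod 2 => c ∈ C ∧ hammingDist c s ≤ t)).card : ℝ)) *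
          ∑ c : Fin n → ZMod 2,
            (if c ∈ C ∧ c ≠ 0 then
              unifCondP (Fin n → ZMod 2) (fun s => hammingDist c s ≤ t)
                (fun s => hammingNorm s ≤ t)
            else 0) := by
  simp only [count_eq, unifE, condP_eq, sum_count, sum_count_sq]
  have hB := (ballVol_pos n t).ne'
  have h0 : ∑ d with d ∈ C, ballCorr n t d =
      ballCorr n t 0 + ∑ d, if d ∈ C ∧ d ≠ 0 then ballCorr n t d else 0 := by
    rw [← Finset.add_sum_erase _ _ (show (0 : Fin n → ZMod 2) ∈ Finset.univ.filter (· ∈ C) by simp),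
      ← Finset.sum_filter]
    congr 2
    ext d
    simp [and_comm]
  have h1 : ∑ d, (if d ∈ C ∧ d ≠ 0 then ballCorr n t d / ∑ u, ballInd n t u else 0) =
      (∑ d, if d ∈ C ∧ d ≠ 0 then ballCorr n t d else 0) / ∑ u, ballInd n t u := by
    rw [Finset.sum_div]
    exact Finset.sum_congr rfl fun d _ => by split_ifs <;> simp
  rw [h0, h1, ballCorr_zero]
  field_simp
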